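/- Let μ be a finite positive Borel measure on ℝ and f ∈ L¹(μ) complex-valued, and define the Stieltjes transform m(z) = ∫ f(x)/(x − z) dμ(x) for z ∈ ℂ \ ℝ. Then conj(m(z)) = m(conj(z)) for all z ∈ ℂ \ ℝ if and only if the complex measure f dμ is real, i.e. ∫_B f dμ ∈ ℝ for every Borel set B ⊆ ℝ (equivalently, f(x) ∈ ℝ for μ-a.e. x). -/

import Mathlib

open MeasureTheory ComplexConjugate

/-!
Conjugation sends the Stieltjes transform of `f` at `z` to that of `conj f` at `conj z`, so the
symmetry says that `f` and `conj f` have the same transform off the real line. A function `g` whose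
transform vanishes off the line is zero almost everywhere: the jump of its transform from `a - iγ`
to `a + iγ` is `2πi` times the integral of `g` against the Cauchy density with location `a` and
scale `γ`, and as `γ → 0` these densities form an approximate identity, so after exchanging
integrals `g` integrates to zero against every test function.
-/

open Filter ProbabilityTheory Topology
open scoped NNReal Real

section CauchyDensity

lemma cauchyPDFReal_comm (x y : ℝ) (γ : ℝ≥0) : cauchyPDFReal x γ y = cauchyPDFReal y γ x := by
  rw [cauchyPDFReal_def, cauchyPDFReal_def, sub_sq_comm]

lemma cauchyPDFReal_nonneg (x : ℝ) (γ : ℝ≥0) (y : ℝ) : 0 ≤ cauchyPDFReal x γ y := by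
  rw [cauchyPDFReal_def]
  positivity

lemma norm_cauchyPDFReal_le (x : ℝ) (γ : ℝ≥0) (y : ℝ) :
    ‖cauchyPDFReal x γ y‖ ≤ π⁻¹ * (γ : ℝ)⁻¹ := by
  rw [Real.norm_of_nonneg (cauchyPDFReal_nonneg x γ y), cauchyPDFReal_def']
  exact mul_le_of_le_one_right (by positivity)
    (inv_le_one_of_one_le₀ (le_add_of_nonneg_right (sq_nonneg _)))

lemma measurable_uncurry_cauchyPDFReal (γ : ℝ≥0) :
    Measurable fun p : ℝ × ℝ ↦ cauchyPDFReal p.1 γ p.2 := by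
  simp only [cauchyPDFReal_def]
  fun_prop

lemma cauchyPDFReal_eq_inv_scale_mul (x : ℝ) (γ : ℝ≥0) (y : ℝ) :
    cauchyPDFReal x γ y = (γ : ℝ)⁻¹ * cauchyPDFReal 0 1 ((γ : ℝ)⁻¹ * (x - y)) := by
  simp only [cauchyPDFReal_def', NNReal.coe_one, inv_one, div_one, sub_zero, mul_one,
    NNReal.coe_inv]
  rw [div_eq_inv_mul, mul_pow, mul_pow, sub_sq_comm, mul_left_comm, mul_assoc]

lemma tendsto_norm_mul_cauchyPDFReal_cobounded :
    Tendsto (fun y : ℝ ↦ ‖y‖ * cauchyPDFReal 0 1 y) (Bornology.cobounded ℝ) (𝓝 0) := by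
  refine squeeze_zero (fun y ↦ mul_nonneg (norm_nonneg y) (cauchyPDFReal_nonneg 0 1 y))
    (fun y ↦ ?_) (tendsto_inv_atTop_zero.comp tendsto_norm_cobounded_atTop)
  obtain rfl | hy := eq_or_ne y 0
  · simp
  have hπ : π⁻¹ ≤ 1 := inv_le_one_of_one_le₀ (by linarith [Real.two_le_pi])
  calc ‖y‖ * cauchyPDFReal 0 1 y = π⁻¹ * (‖y‖ * (y ^ 2 + 1)⁻¹) := by
        simp only [cauchyPDFReal_def, NNReal.coe_one, sub_zero, mul_one, one_pow]
        ring
    _ ≤ 1 * (‖y‖ * (‖y‖ ^ 2)⁻¹) := by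
        rw [Real.norm_eq_abs, sq_abs]
        gcongr
        linarith
    _ = ‖y‖⁻¹ := by
        have : ‖y‖ ≠ 0 := norm_ne_zero_iff.2 hy
        field_simp

variable {E : Type*} [NormedAddCommGroup E] [NormedSpace ℝ E]

lemma norm_integral_cauchyPDFReal_smul_le {φ : ℝ → E} {C : ℝ} (hC : ∀ t, ‖φ t‖ ≤ C) (x : ℝ)
    {γ : ℝ≥0} (hγ : γ ≠ 0) : ‖∫ t, cauchyPDFReal x γ t • φ t‖ ≤ C := by
  calc ‖∫ t, cauchyPDFReal x γ t • φ t‖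
      ≤ ∫ t, cauchyPDFReal x γ t * C := by
        refine norm_integral_le_of_norm_le ((integrable_cauchyPDFReal x).mul_const C)
          (ae_of_all _ fun t ↦ ?_)
        rw [norm_smul, Real.norm_of_nonneg (cauchyPDFReal_nonneg x γ t)]
        exact mul_le_mul_of_nonneg_left (hC t) (cauchyPDFReal_nonneg x γ t)
    _ = C := by rw [integral_mul_const, integral_cauchyPDFReal_eq_one x hγ, one_mul]

lemma tendsto_integral_cauchyPDFReal_smul [CompleteSpace E] {φ : ℝ → E} (hφ : Integrable φ) {x : ℝ}
    (hx : ContinuousAt φ x) :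
    Tendsto (fun γ : ℝ≥0 ↦ ∫ t, cauchyPDFReal x γ t • φ t) (𝓝[>] 0) (𝓝 (φ x)) := by
  have hpeak := tendsto_integral_comp_smul_smul_of_integrable' (cauchyPDFReal_nonneg 0 1)
    (integral_cauchyPDFReal_eq_one 0 one_ne_zero)
    (by simpa using tendsto_norm_mul_cauchyPDFReal_cobounded) hφ hx
  have hscale : Tendsto (fun γ : ℝ≥0 ↦ ((γ⁻¹ : ℝ≥0) : ℝ)) (𝓝[>] 0) atTop :=
    NNReal.tendsto_coe_atTop.2 tendsto_inv_nhdsGT_zero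
  refine (hpeak.comp hscale).congr fun γ ↦ integral_congr_ae (ae_of_all _ fun t ↦ ?_)
  simp only [Module.finrank_self, pow_one, smul_eq_mul, NNReal.coe_inv,
    ← cauchyPDFReal_eq_inv_scale_mul]

variable {μ : Measure ℝ} {f : ℝ → E}

lemma tendsto_integral_integral_cauchyPDFReal_smul (hf : Integrable f μ) {φ : ℝ → ℝ}
    (hφ : Continuous φ) (hφ_int : Integrable φ) {C : ℝ} (hC : ∀ t, ‖φ t‖ ≤ C) :
    Tendsto (fun γ : ℝ≥0 ↦ ∫ x, (∫ t, cauchyPDFReal x γ t • φ t) • f x ∂μ) (𝓝[>] 0)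
      (𝓝 (∫ x, φ x • f x ∂μ)) := by
  refine tendsto_integral_filter_of_dominated_convergence (fun x ↦ C * ‖f x‖)
    (Eventually.of_forall fun γ ↦ ?_) ?_ (hf.norm.const_mul C)
    (ae_of_all _ fun x ↦
      (tendsto_integral_cauchyPDFReal_smul hφ_int hφ.continuousAt).smul_const (f x))
  · have hmeas : Measurable fun p : ℝ × ℝ ↦ cauchyPDFReal p.1 γ p.2 • φ p.2 :=
      (measurable_uncurry_cauchyPDFReal γ).smul (hφ.measurable.comp measurable_snd)
    exact hmeas.stronglyMeasurable.integral_prod_right.aestronglyMeasurable.smul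
      hf.aestronglyMeasurable
  · filter_upwards [self_mem_nhdsWithin] with γ (hγ : 0 < γ)
    refine ae_of_all _ fun x ↦ ?_
    rw [norm_smul]
    gcongr
    exact norm_integral_cauchyPDFReal_smul_le hC x hγ.ne'

variable [CompleteSpace E]

lemma integral_integral_cauchyPDFReal_smul_comm [SFinite μ] (hf : Integrable f μ) {φ : ℝ → ℝ}
    (hφ : Integrable φ) (γ : ℝ≥0) :
    ∫ x, (∫ t, cauchyPDFReal x γ t • φ t) • f x ∂μ =
      ∫ t, φ t • ∫ x, cauchyPDFReal t γ x • f x ∂μ := by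
  have hint :
      Integrable (fun p : ℝ × ℝ ↦ cauchyPDFReal p.1 γ p.2 • φ p.2 • f p.1) (μ.prod volume) := by
    refine Integrable.bdd_smul ?_ (π⁻¹ * (γ : ℝ)⁻¹)
      (measurable_uncurry_cauchyPDFReal γ).aestronglyMeasurable
      (ae_of_all _ fun p ↦ norm_cauchyPDFReal_le p.1 γ p.2)
    exact (hφ.smul_prod hf).swap
  calc ∫ x, (∫ t, cauchyPDFReal x γ t • φ t) • f x ∂μ
      = ∫ x, (∫ t, cauchyPDFReal x γ t • φ t • f x) ∂μ := by
        simp only [← integral_smul_const, smul_assoc]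
    _ = ∫ t, ∫ x, cauchyPDFReal x γ t • φ t • f x ∂μ := integral_integral_swap hint
    _ = ∫ t, φ t • ∫ x, cauchyPDFReal t γ x • f x ∂μ := by
        simp only [← integral_smul, cauchyPDFReal_comm _ _ γ, smul_comm (φ _)]

lemma ae_eq_zero_of_integral_cauchyPDFReal_smul_eq_zero_of_sFinite [SFinite μ]
    (hf : Integrable f μ) (h : ∀ a (γ : ℝ≥0), 0 < γ → ∫ x, cauchyPDFReal a γ x • f x ∂μ = 0) :
    f =ᵐ[μ] 0 := by
  refine ae_eq_zero_of_integral_contDiff_smul_eq_zero hf.locallyIntegrable fun φ hφ hφ_supp ↦ ?_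
  have hφ_int : Integrable φ := hφ.continuous.integrable_of_hasCompactSupport hφ_supp
  obtain ⟨C, hC⟩ := hφ_supp.exists_bound_of_continuous hφ.continuous
  refine tendsto_nhds_unique
    (tendsto_integral_integral_cauchyPDFReal_smul hf hφ.continuous hφ_int hC)
    (tendsto_const_nhds.congr' ?_)
  filter_upwards [self_mem_nhdsWithin] with γ hγ
  simp only [integral_integral_cauchyPDFReal_smul_comm hf hφ_int, h _ γ hγ, smul_zero,
    integral_zero]

lemma ae_eq_zero_of_integral_cauchyPDFReal_smul_eq_zero
    (hf : Integrable f μ) (h : ∀ a (γ : ℝ≥0), 0 < γ → ∫ x, cauchyPDFReal a γ x • f x ∂μ = 0) :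
    f =ᵐ[μ] 0 := by
  have hfin : AEFinStronglyMeasurable f μ := hf.aefinStronglyMeasurable
  have : SigmaFinite (μ.restrict hfin.sigmaFiniteSet) := hfin.sigmaFinite_restrict
  have hcompl : f =ᵐ[μ.restrict hfin.sigmaFiniteSetᶜ] 0 := hfin.ae_eq_zero_compl
  refine ae_of_ae_restrict_of_ae_restrict_compl hfin.sigmaFiniteSet ?_ hcompl
  refine ae_eq_zero_of_integral_cauchyPDFReal_smul_eq_zero_of_sFinite hf.restrict fun a γ hγ ↦ ?_
  rw [← h a γ hγ]
  refine setIntegral_eq_integral_of_ae_compl_eq_zero ?_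
  filter_upwards [(ae_restrict_iff' hfin.measurableSet.compl).1 hcompl] with x hx hxs
  rw [hx hxs, Pi.zero_apply, smul_zero]

end CauchyDensity

section StieltjesTransform

variable {E : Type*} [NormedAddCommGroup E] [NormedSpace ℂ E] {μ : Measure ℝ}

/-- The Stieltjes transform `z ↦ ∫ f(x) / (x - z) dμ(x)` of the vector measure `f dμ` on the real
line, with the scalar kernel `(x - z)⁻¹` written on the left of the vector `f x`. -/
noncomputable def stieltjesTransform (μ : Measure ℝ) (f : ℝ → E) (z : ℂ) : E :=
  ∫ x, ((x : ℂ) - z)⁻¹ • f x ∂μ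

lemma stieltjesTransform_eq_integral_div (f : ℝ → ℂ) (z : ℂ) :
    stieltjesTransform μ f z = ∫ x, f x / ((x : ℂ) - z) ∂μ := by
  simp only [stieltjesTransform, smul_eq_mul, div_eq_inv_mul]

lemma conj_stieltjesTransform (f : ℝ → ℂ) (z : ℂ) :
    conj (stieltjesTransform μ f z) = stieltjesTransform μ (fun x ↦ conj (f x)) (conj z) := by
  simp only [stieltjesTransform, ← integral_conj, smul_eq_mul, map_mul, map_inv₀, map_sub,
    Complex.conj_ofReal]

lemma ofReal_sub_ne_zero {z : ℂ} (hz : z.im ≠ 0) (x : ℝ) : (x : ℂ) - z ≠ 0 := fun h ↦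
  hz (by simpa using congrArg Complex.im h)

lemma norm_inv_ofReal_sub_le {z : ℂ} (hz : z.im ≠ 0) (x : ℝ) : ‖((x : ℂ) - z)⁻¹‖ ≤ |z.im|⁻¹ := by
  rw [norm_inv]
  refine inv_anti₀ (abs_pos.2 hz) ?_
  simpa using Complex.abs_im_le_norm ((x : ℂ) - z)

lemma integrable_inv_ofReal_sub_smul {f : ℝ → E} (hf : Integrable f μ) {z : ℂ} (hz : z.im ≠ 0) :
    Integrable (fun x : ℝ ↦ ((x : ℂ) - z)⁻¹ • f x) μ := by
  have hcont : Continuous fun x : ℝ ↦ ((x : ℂ) - z)⁻¹ :=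
    Continuous.inv₀ (by fun_prop) (ofReal_sub_ne_zero hz)
  exact hf.bdd_smul _ hcont.aestronglyMeasurable (ae_of_all _ (norm_inv_ofReal_sub_le hz))

lemma stieltjesTransform_sub {f g : ℝ → E} (hf : Integrable f μ) (hg : Integrable g μ) {z : ℂ}
    (hz : z.im ≠ 0) :
    stieltjesTransform μ (f - g) z = stieltjesTransform μ f z - stieltjesTransform μ g z := by
  simp only [stieltjesTransform, Pi.sub_apply, smul_sub]
  exact integral_sub (integrable_inv_ofReal_sub_smul hf hz) (integrable_inv_ofReal_sub_smul hg hz)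

lemma inv_ofReal_sub_sub_inv_ofReal_sub_conj (a : ℝ) {γ : ℝ≥0} (hγ : γ ≠ 0) (x : ℝ) :
    ((x : ℂ) - ⟨a, γ⟩)⁻¹ - ((x : ℂ) - ⟨a, -γ⟩)⁻¹ = 2 * π * Complex.I * cauchyPDFReal a γ x := by
  have hγ' : (γ : ℝ) ≠ 0 := NNReal.coe_ne_zero.2 hγ
  have h₁ : (x : ℂ) - ⟨a, γ⟩ ≠ 0 := ofReal_sub_ne_zero hγ' x
  have h₂ : (x : ℂ) - ⟨a, -γ⟩ ≠ 0 := ofReal_sub_ne_zero (neg_ne_zero.2 hγ') x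
  have hmul : ((x : ℂ) - ⟨a, γ⟩) * (x - ⟨a, -γ⟩) = ((x - a) ^ 2 + γ ^ 2 : ℝ) := by
    rw [Complex.mk_eq_add_mul_I, Complex.mk_eq_add_mul_I]
    push_cast
    linear_combination -(γ : ℂ) ^ 2 * Complex.I_sq
  have hdiff : ((x : ℂ) - ⟨a, -γ⟩) - (x - ⟨a, γ⟩) = 2 * Complex.I * γ := by
    rw [Complex.mk_eq_add_mul_I, Complex.mk_eq_add_mul_I]
    push_cast
    ring
  rw [inv_sub_inv h₁ h₂, hmul, hdiff, cauchyPDFReal_def]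
  push_cast
  have hπ : (π : ℂ) ≠ 0 := Complex.ofReal_ne_zero.2 Real.pi_ne_zero
  field_simp

lemma stieltjesTransform_sub_stieltjesTransform_conj {f : ℝ → E} (hf : Integrable f μ) (a : ℝ)
    {γ : ℝ≥0} (hγ : γ ≠ 0) :
    stieltjesTransform μ f ⟨a, γ⟩ - stieltjesTransform μ f ⟨a, -γ⟩ =
      (2 * π * Complex.I) • ∫ x, cauchyPDFReal a γ x • f x ∂μ := by
  have hγ' : (γ : ℝ) ≠ 0 := NNReal.coe_ne_zero.2 hγ
  rw [stieltjesTransform, stieltjesTransform,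
    ← integral_sub (integrable_inv_ofReal_sub_smul hf hγ')
      (integrable_inv_ofReal_sub_smul hf (neg_ne_zero.2 hγ')), ← integral_smul]
  simp only [← sub_smul, inv_ofReal_sub_sub_inv_ofReal_sub_conj a hγ, mul_smul, Complex.coe_smul]

theorem ae_eq_zero_of_stieltjesTransform_eq_zero [CompleteSpace E] {f : ℝ → E}
    (hf : Integrable f μ) (h : ∀ z : ℂ, z.im ≠ 0 → stieltjesTransform μ f z = 0) :
    f =ᵐ[μ] 0 := by
  refine ae_eq_zero_of_integral_cauchyPDFReal_smul_eq_zero hf fun a γ hγ ↦ ?_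
  have hγ' : (γ : ℝ) ≠ 0 := NNReal.coe_ne_zero.2 hγ.ne'
  have hjump := stieltjesTransform_sub_stieltjesTransform_conj hf a hγ.ne'
  rw [h _ hγ', h _ (neg_ne_zero.2 hγ'), sub_self] at hjump
  exact (smul_eq_zero_iff_right Complex.two_pi_I_ne_zero).1 hjump.symm

theorem stieltjesTransform_eq_iff_ae_eq [CompleteSpace E] {f g : ℝ → E} (hf : Integrable f μ)
    (hg : Integrable g μ) :
    (∀ z : ℂ, z.im ≠ 0 → stieltjesTransform μ f z = stieltjesTransform μ g z) ↔ f =ᵐ[μ] g := by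
  refine ⟨fun h ↦ ?_, fun h z _ ↦ integral_congr_ae (h.mono fun x hx ↦ by simp only [hx])⟩
  rw [← sub_ae_eq_zero]
  refine ae_eq_zero_of_stieltjesTransform_eq_zero (hf.sub hg) fun z hz ↦ ?_
  rw [stieltjesTransform_sub hf hg hz, h z hz, sub_self]

end StieltjesTransform

lemma conj_ae_eq_self_iff_forall_im_setIntegral_eq_zero {α : Type*} [MeasurableSpace α]
    {μ : Measure α} {f : α → ℂ} (hf : Integrable f μ) :
    (fun x ↦ conj (f x)) =ᵐ[μ] f ↔
      ∀ s : Set α, MeasurableSet s → (∫ x in s, f x ∂μ).im = 0 := by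
  have him (s : Set α) : (∫ x in s, f x ∂μ).im = ∫ x in s, (f x).im ∂μ :=
    (integral_im (𝕜 := ℂ) hf.integrableOn).symm
  simp only [him, EventuallyEq, Complex.conj_eq_iff_im]
  refine ⟨fun h s _ ↦ integral_eq_zero_of_ae (ae_restrict_of_ae h), fun h ↦ ?_⟩
  exact hf.im.ae_eq_zero_of_forall_setIntegral_eq_zero fun s hs _ ↦ h s hs

theorem stieltjes_transform_conj_symm_general (μ : Measure ℝ) (f : ℝ → ℂ) (hf : Integrable f μ) :
    (∀ z : ℂ, z.im ≠ 0 →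
        conj (∫ x, f x / ((x : ℂ) - z) ∂μ) = ∫ x, f x / ((x : ℂ) - conj z) ∂μ) ↔
      (∀ B : Set ℝ, MeasurableSet B → (∫ x in B, f x ∂μ).im = 0) := by
  have hf_conj : Integrable (fun x ↦ conj (f x)) μ :=
    Complex.conjCLE.toContinuousLinearMap.integrable_comp hf
  rw [← conj_ae_eq_self_iff_forall_im_setIntegral_eq_zero hf,
    ← stieltjesTransform_eq_iff_ae_eq hf_conj hf, (starRingEnd ℂ).surjective.forall]
  simp only [← stieltjesTransform_eq_integral_div, conj_stieltjesTransform, Complex.conj_im,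
    neg_ne_zero, Complex.conj_conj]

/-- **Conjugation symmetry of Stieltjes transforms of complex measures.**
For a complex measure `f dμ` on `ℝ` with Stieltjes transform
`m(z) = ∫ f(x)/(x − z) dμ(x)` (`z ∈ ℂ \ ℝ`), one has `conj (m z) = m (conj z)` for all
`z ∈ ℂ \ ℝ` iff the complex measure `f dμ` is real, i.e. `∫_B f dμ ∈ ℝ` for every Borel
set `B`. -/
theorem stieltjes_transform_conj_symm
    (μ : Measure ℝ) [IsFiniteMeasure μ] (f : ℝ → ℂ) (hf : Integrable f μ) :
    (∀ z : ℂ, z.im ≠ 0 →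
        conj (∫ x, f x / ((x : ℂ) - z) ∂μ) = ∫ x, f x / ((x : ℂ) - conj z) ∂μ) ↔
      (∀ B : Set ℝ, MeasurableSet B → (∫ x in B, f x ∂μ).im = 0) :=
  stieltjes_transform_conj_symm_general μ f hf
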